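/- arXiv:1310.4284 — 3 statements merged into one kernel-verified Lean document; each statement's English description precedes it below -/
import Mathlib

section
/- Let (Ω, P) be a probability space, N a positive integer, and g : Fin N → ℝ with 0 < g_j ≤ 1 for all j. Let (Φ_j)_{j=1}^{N} be mutually independent real random variables on Ω with E[Φ_j] = 0, E[Φ_j²] = 1, and E[Φ_j⁴] = 1/g_j for every j (each Φ_j lying in L⁴). For u, v ∈ ℝ^N define w = (Σ_{j=1}^{N} u_j Φ_j) · (Σ_{j=1}^{N} v_j Φ_j). Then E[w²] = 2⟨u, v⟩² + ‖u‖₂²·‖v‖₂² + Σ_{j=1}^{N} (1/g_j)·u_j²·v_j² − 3·Σ_{j=1}^{N} u_j²·v_j². -/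
open MeasureTheory ProbabilityTheory Finset

/-- `f` is integrable with integral `c`. -/
def HasInt {Ω : Type*} [MeasurableSpace Ω] (P : Measure Ω) (f : Ω → ℝ) (c : ℝ) : Prop :=
  Integrable f P ∧ ∫ ω, f ω ∂P = c

theorem HasInt.add {Ω : Type*} [MeasurableSpace Ω] {P : Measure Ω} {f g : Ω → ℝ} {c d : ℝ}
    (hf : HasInt P f c) (hg : HasInt P g d) : HasInt P (fun ω => f ω + g ω) (c + d) :=
  ⟨hf.1.add hg.1, by rw [integral_add hf.1 hg.1, hf.2, hg.2]⟩

theorem HasInt.smul {Ω : Type*} [MeasurableSpace Ω] {P : Measure Ω} {f : Ω → ℝ} {c : ℝ}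
    (a : ℝ) (hf : HasInt P f c) : HasInt P (fun ω => a * f ω) (a * c) :=
  ⟨hf.1.const_mul a, by rw [integral_const_mul, hf.2]⟩

theorem integrable_four {Ω : Type*} [MeasurableSpace Ω] {P : Measure Ω} {A B C D : Ω → ℝ}
    (hA : MemLp A 4 P) (hB : MemLp B 4 P) (hC : MemLp C 4 P) (hD : MemLp D 4 P) :
    Integrable (fun ω => A ω * B ω * (C ω * D ω)) P := by
  have : ENNReal.HolderTriple 4 4 2 := ⟨by
    rw [← ENNReal.toReal_eq_toReal_iff' (by simp) (by simp), ENNReal.toReal_add (by simp) (by simp)]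
    norm_num⟩
  have h1 : MemLp (fun ω => A ω * B ω) 2 P := hB.mul' hA
  have h2 : MemLp (fun ω => C ω * D ω) 2 P := hD.mul' hC
  exact h1.integrable_mul h2

theorem step_lemma {Ω : Type*} [MeasurableSpace Ω] {P : Measure Ω} [IsProbabilityMeasure P]
    {A B X : Ω → ℝ} (hA : MemLp A 4 P) (hB : MemLp B 4 P) (hX : MemLp X 4 P)
    (hi : IndepFun (fun ω => (A ω, B ω)) X P)
    (a b q cAA cBB cAB M : ℝ)
    (h1 : ∫ ω, X ω ∂P = 0) (h2 : ∫ ω, X ω ^ 2 ∂P = 1) (h4 : ∫ ω, X ω ^ 4 ∂P = q)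
    (eA : ∫ ω, A ω ∂P = 0) (eB : ∫ ω, B ω ∂P = 0)
    (eAA : ∫ ω, A ω * A ω ∂P = cAA) (eBB : ∫ ω, B ω * B ω ∂P = cBB)
    (eAB : ∫ ω, A ω * B ω ∂P = cAB) (eM : ∫ ω, (A ω * B ω) ^ 2 ∂P = M) :
    (∫ ω, (A ω + a * X ω) ∂P = 0) ∧
    (∫ ω, (A ω + a * X ω) * (B ω + b * X ω) ∂P = cAB + a * b) ∧
    (∫ ω, ((A ω + a * X ω) * (B ω + b * X ω)) ^ 2 ∂P
      = M + a ^ 2 * cBB + b ^ 2 * cAA + 4 * a * b * cAB + a ^ 2 * b ^ 2 * q) := by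
  have one : MemLp (fun _ : Ω => (1 : ℝ)) 4 P := memLp_const 1
  have ind : ∀ (f : ℝ × ℝ → ℝ) (k : ℕ), Measurable f →
      ∫ ω, f (A ω, B ω) * X ω ^ k ∂P = (∫ ω, f (A ω, B ω) ∂P) * ∫ ω, X ω ^ k ∂P := by
    intro f k hf
    exact hi.integral_fun_comp_mul_comp (f := f) (g := fun x => x ^ k)
      (hA.aestronglyMeasurable.aemeasurable.prodMk hB.aestronglyMeasurable.aemeasurable)
      hX.aestronglyMeasurable.aemeasurable hf.aestronglyMeasurable
      (by fun_prop)
  have tA : HasInt P A 0 := ⟨by simpa using integrable_four hA one one one, eA⟩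
  have tX : HasInt P X 0 := ⟨by simpa using integrable_four hX one one one, h1⟩
  have tAB : HasInt P (fun ω => A ω * B ω) cAB :=
    ⟨by simpa using integrable_four hA hB one one, eAB⟩
  have tAX : HasInt P (fun ω => A ω * X ω) 0 :=
    ⟨by simpa using integrable_four hA hX one one, by
      have := ind (fun p => p.1) 1 (by fun_prop)
      simpa [h1] using this⟩
  have tBX : HasInt P (fun ω => B ω * X ω) 0 :=
    ⟨by simpa using integrable_four hB hX one one, by
      have := ind (fun p => p.2) 1 (by fun_prop)
      simpa [h1] using this⟩
  have tXX : HasInt P (fun ω => X ω ^ 2) 1 :=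
    ⟨by simpa [sq] using integrable_four hX hX one one, h2⟩
  have sM : HasInt P (fun ω => (A ω * B ω) ^ 2) M :=
    ⟨by simpa [sq] using integrable_four hA hB hA hB, eM⟩
  have sBB : HasInt P (fun ω => B ω * B ω * X ω ^ 2) cBB :=
    ⟨by simpa [sq] using integrable_four hB hB hX hX, by
      have := ind (fun p => p.2 * p.2) 2 (by fun_prop)
      simpa [h2, eBB] using this⟩
  have sAA : HasInt P (fun ω => A ω * A ω * X ω ^ 2) cAA :=
    ⟨by simpa [sq] using integrable_four hA hA hX hX, by
      have := ind (fun p => p.1 * p.1) 2 (by fun_prop)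
      simpa [h2, eAA] using this⟩
  have sAB : HasInt P (fun ω => A ω * B ω * X ω ^ 2) cAB :=
    ⟨by simpa [sq] using integrable_four hA hB hX hX, by
      have := ind (fun p => p.1 * p.2) 2 (by fun_prop)
      simpa [h2, eAB] using this⟩
  have s4 : HasInt P (fun ω => X ω ^ 4) q :=
    ⟨by
      refine (integrable_four hX hX hX hX).congr (Filter.Eventually.of_forall fun ω => ?_)
      simp only []; ring, h4⟩
  have sABB : HasInt P (fun ω => A ω * B ω * B ω * X ω ^ 1) 0 :=
    ⟨by
      refine (integrable_four hA hB hB hX).congr (Filter.Eventually.of_forall fun ω => ?_)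
      simp only []; ring, by
      have := ind (fun p => p.1 * p.2 * p.2) 1 (by fun_prop)
      simpa [h1] using this⟩
  have sAAB : HasInt P (fun ω => A ω * A ω * B ω * X ω ^ 1) 0 :=
    ⟨by
      refine (integrable_four hA hA hB hX).congr (Filter.Eventually.of_forall fun ω => ?_)
      simp only []; ring, by
      have := ind (fun p => p.1 * p.1 * p.2) 1 (by fun_prop)
      simpa [h1] using this⟩
  have sA3 : HasInt P (fun ω => A ω * X ω ^ 3) 0 :=
    ⟨by
      refine (integrable_four hA hX hX hX).congr (Filter.Eventually.of_forall fun ω => ?_)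
      simp only []; ring, by
      have := ind (fun p => p.1) 3 (by fun_prop)
      simpa [eA] using this⟩
  have sB3 : HasInt P (fun ω => B ω * X ω ^ 3) 0 :=
    ⟨by
      refine (integrable_four hB hX hX hX).congr (Filter.Eventually.of_forall fun ω => ?_)
      simp only []; ring, by
      have := ind (fun p => p.2) 3 (by fun_prop)
      simpa [eB] using this⟩
  refine ⟨?_, ?_, ?_⟩
  · rw [(tA.add (tX.smul a)).2]; ring
  · have := (((tAB.add (tAX.smul b)).add (tBX.smul a)).add (tXX.smul (a * b))).2
    calc _ = _ := integral_congr_ae (Filter.Eventually.of_forall fun ω => by ring)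
      _ = _ := this
      _ = _ := by ring
  · have := ((((((((sM.add (sBB.smul (a ^ 2))).add (sAA.smul (b ^ 2))).add
      (sAB.smul (4 * a * b))).add (s4.smul (a ^ 2 * b ^ 2))).add (sABB.smul (2 * a))).add
      (sAAB.smul (2 * b))).add (sB3.smul (2 * a ^ 2 * b))).add (sA3.smul (2 * a * b ^ 2))).2
    calc _ = _ := integral_congr_ae (Filter.Eventually.of_forall fun ω => by ring)
      _ = _ := this
      _ = _ := by ring

theorem induct_lemma {Ω ι : Type*} [MeasurableSpace Ω] {P : Measure Ω} [IsProbabilityMeasure P]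
    [DecidableEq ι] (q : ι → ℝ) (Φ : ι → Ω → ℝ)
    (hindep : iIndepFun Φ P)
    (hL4 : ∀ j, MemLp (Φ j) 4 P)
    (hmean : ∀ j, ∫ ω, Φ j ω ∂P = 0)
    (hsq : ∀ j, ∫ ω, (Φ j ω) ^ 2 ∂P = 1)
    (hfour : ∀ j, ∫ ω, (Φ j ω) ^ 4 ∂P = q j) (s : Finset ι) : ∀ (u v : ι → ℝ),
    (∫ ω, (∑ j ∈ s, u j * Φ j ω) ∂P = 0) ∧
    (∫ ω, (∑ j ∈ s, u j * Φ j ω) * (∑ j ∈ s, v j * Φ j ω) ∂P = ∑ j ∈ s, u j * v j) ∧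
    (∫ ω, ((∑ j ∈ s, u j * Φ j ω) * (∑ j ∈ s, v j * Φ j ω)) ^ 2 ∂P =
      2 * (∑ j ∈ s, u j * v j) ^ 2 + (∑ j ∈ s, u j * u j) * (∑ j ∈ s, v j * v j) +
        ∑ j ∈ s, q j * (u j) ^ 2 * (v j) ^ 2 - 3 * ∑ j ∈ s, (u j) ^ 2 * (v j) ^ 2) := by
  induction s using Finset.induction_on with
  | empty => intro u v; simp
  | insert i s his ih =>
    intro u v
    have hL : ∀ w : ι → ℝ, MemLp (fun ω => ∑ j ∈ s, w j * Φ j ω) 4 P := fun w =>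
      memLp_finsetSum s fun j _ => (hL4 j).const_mul (w j)
    have hi : IndepFun (fun ω => (∑ j ∈ s, u j * Φ j ω, ∑ j ∈ s, v j * Φ j ω)) (Φ i) P := by
      have h := hindep.indepFun_finset₀ s {i} (by simpa using his)
        (fun j => (hL4 j).aestronglyMeasurable.aemeasurable)
      have hm : Measurable (fun x : ({i} : Finset ι) → ℝ => x ⟨i, by simp⟩) :=
        measurable_pi_apply _
      have h' := h.comp
        (φ := fun x : s → ℝ => (∑ j : s, u j * x j, ∑ j : s, v j * x j))
        (ψ := fun x : ({i} : Finset ι) → ℝ => x ⟨i, by simp⟩) (by fun_prop) hm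
      convert h' using 1
      swap
      · rfl
      funext ω
      simp only [Function.comp]
      rw [Finset.sum_coe_sort s (fun j => u j * Φ j ω), Finset.sum_coe_sort s (fun j => v j * Φ j ω)]
    have key := step_lemma (hL u) (hL v) (hL4 i) hi (u i) (v i) (q i) _ _ _ _ (hmean i) (hsq i)
      (hfour i) (ih u u).1 (ih v v).1 (ih u u).2.1 (ih v v).2.1 (ih u v).2.1 (ih u v).2.2
    simp only [Finset.sum_insert his]
    simp only [add_comm (_ * Φ i _)]
    refine ⟨key.1, key.2.1.trans (by ring), key.2.2.trans (by ring)⟩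

/-- One row of a sparse random projection: if `Φ₁, …, Φ_N` are independent with
`E[Φ_j] = 0`, `E[Φ_j²] = 1`, `E[Φ_j⁴] = 1/g_j`, then for `u v : ℝ^N` and
`w = (Σ_j u_j Φ_j)(Σ_j v_j Φ_j)` one has
`E[w²] = 2⟨u,v⟩² + ‖u‖₂²‖v‖₂² + Σ_j (1/g_j) u_j² v_j² − 3 Σ_j u_j² v_j²`. -/
theorem sparse_projection_row_inner_second_moment
    {Ω : Type*} [MeasurableSpace Ω] (P : Measure Ω) [IsProbabilityMeasure P]
    (N : ℕ) (hN : 0 < N) (g : Fin N → ℝ)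
    (hg0 : ∀ j, 0 < g j) (hg1 : ∀ j, g j ≤ 1)
    (Φ : Fin N → Ω → ℝ)
    (hindep : iIndepFun Φ P)
    (hL4 : ∀ j, MemLp (Φ j) 4 P)
    (hmean : ∀ j, ∫ ω, Φ j ω ∂P = 0)
    (hsq : ∀ j, ∫ ω, (Φ j ω) ^ 2 ∂P = 1)
    (hfour : ∀ j, ∫ ω, (Φ j ω) ^ 4 ∂P = 1 / g j)
    (u v : Fin N → ℝ) :
    ∫ ω, ((∑ j, u j * Φ j ω) * (∑ j, v j * Φ j ω)) ^ 2 ∂P =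
      2 * (∑ j, u j * v j) ^ 2 + (∑ j, (u j) ^ 2) * (∑ j, (v j) ^ 2) +
        ∑ j, (1 / g j) * (u j) ^ 2 * (v j) ^ 2 - 3 * ∑ j, (u j) ^ 2 * (v j) ^ 2 := by
  have h := (induct_lemma (fun j => 1 / g j) Φ hindep hL4 hmean hsq hfour Finset.univ u v).2.2
  simp only [← sq] at h
  exact h
end

section
/- (Proposition 1, variance part.) Let (Ω, P) be a probability space, let ℓ and N be positive integers, and let g : Fin N → ℝ with 0 < g_j ≤ 1 for all j. Let (Φ_{ij})_{i∈Fin ℓ, j∈Fin N} be mutually independent real random variables with E[Φ_{ij}] = 0, E[Φ_{ij}²] = 1, and E[Φ_{ij}⁴] = 1/g_j for all i, j (each Φ_{ij} lying in L⁴). For u, v ∈ ℝ^N, let x = (1/√ℓ)·Φu and y = (1/√ℓ)·Φv, where Φ is the ℓ × N random matrix with entries Φ_{ij}. Then Var(⟨x, y⟩) = (1/ℓ)·( ⟨u, v⟩² + ‖u‖₂²·‖v‖₂² + Σ_{j=1}^{N} (1/g_j)·u_j²·v_j² − 3·Σ_{j=1}^{N} u_j²·v_j² ). -/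
open MeasureTheory ProbabilityTheory Finset

lemma srp_indep {Ω ι : Type*} [MeasurableSpace Ω] {P : Measure Ω} [DecidableEq ι]
    (X : ι → Ω → ℝ) (hi : iIndepFun X P) (hm : ∀ j, AEMeasurable (X j) P)
    (S T : Finset ι) (hST : Disjoint S T) (f : (S → ℝ) → ℝ) (h : (T → ℝ) → ℝ)
    (hf : Measurable f) (hh : Measurable h) :
    IndepFun (fun ω => f (fun i => X i ω)) (fun ω => h (fun i => X i ω)) P :=
  (hi.indepFun_finset₀ S T hST hm).comp hf hh

lemma srp_zero {Ω ι : Type*} [MeasurableSpace Ω] {P : Measure Ω} [DecidableEq ι]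
    (X : ι → Ω → ℝ) (hi : iIndepFun X P) (hm : ∀ j, AEMeasurable (X j) P)
    (h0 : ∀ j, ∫ ω, X j ω ∂P = 0) (j k l m : ι) (hk : j ≠ k) (hl : j ≠ l) (hm' : j ≠ m) :
    ∫ ω, X j ω * (X k ω * X l ω * X m ω) ∂P = 0 := by
  have := srp_indep X hi hm {j} {k, l, m} (by simp [hk, hl, hm'])
    (fun z => z ⟨j, by simp⟩)
    (fun z => z ⟨k, by simp⟩ * z ⟨l, by simp⟩ * z ⟨m, by simp⟩) (by fun_prop) (by fun_prop)
  have h2 := this.integral_fun_mul_eq_mul_integral (hm j).aestronglyMeasurable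
    (((hm k).mul (hm l)).mul (hm m)).aestronglyMeasurable
  simp only at h2
  rw [h2, h0, zero_mul]

lemma srp_four {Ω ι : Type*} [MeasurableSpace Ω] {P : Measure Ω} [DecidableEq ι]
    (X : ι → Ω → ℝ) (hi : iIndepFun X P) (hm : ∀ j, AEMeasurable (X j) P)
    (h0 : ∀ j, ∫ ω, X j ω ∂P = 0) (h2 : ∀ j, ∫ ω, X j ω ^ 2 ∂P = 1)
    (q : ι → ℝ) (h4 : ∀ j, ∫ ω, X j ω ^ 4 ∂P = q j) (j k l m : ι) :
    ∫ ω, X j ω * X k ω * (X l ω * X m ω) ∂P =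
      (if j = k then 1 else 0) * (if l = m then 1 else 0) +
      (if j = l then 1 else 0) * (if k = m then 1 else 0) +
      (if j = m then 1 else 0) * (if k = l then 1 else 0) +
      (if j = k then 1 else 0) * (if j = l then 1 else 0) * (if j = m then 1 else 0)
        * (q j - 3) := by
  have pair : ∀ a b, a ≠ b → ∫ ω, X a ω ^ 2 * X b ω ^ 2 ∂P = 1 := by
    intro a b hab
    have := ((hi.indepFun hab).comp (φ := fun z => z ^ 2) (ψ := fun z => z ^ 2)
      (by fun_prop) (by fun_prop)).integral_mul_eq_mul_integral
      ((hm a).pow_const 2).aestronglyMeasurable ((hm b).pow_const 2).aestronglyMeasurable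
    have h3 : ∫ ω, X a ω ^ 2 * X b ω ^ 2 ∂P = (∫ ω, X a ω ^ 2 ∂P) * ∫ ω, X b ω ^ 2 ∂P := this
    rw [h3, h2, h2, one_mul]
  have z := srp_zero X hi hm h0
  by_cases hjk : j = k
  · subst hjk
    by_cases hlm : l = m
    · subst hlm
      by_cases hjl : j = l
      · subst hjl
        simp only [if_true]
        rw [show (fun ω => X j ω * X j ω * (X j ω * X j ω)) = fun ω => X j ω ^ 4 by
          ext; ring, h4]
        ring
      · rw [show (fun ω => X j ω * X j ω * (X l ω * X l ω)) = fun ω => X j ω ^ 2 * X l ω ^ 2 by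
          ext; ring, pair _ _ hjl]
        simp [hjl]
    · by_cases hjl : j = l
      · subst hjl
        rw [show (fun ω => X j ω * X j ω * (X j ω * X m ω)) =
          fun ω => X m ω * (X j ω * X j ω * X j ω) by ext; ring,
          z m j j j (Ne.symm hlm) (Ne.symm hlm) (Ne.symm hlm)]
        simp [hlm]
      · rw [show (fun ω => X j ω * X j ω * (X l ω * X m ω)) =
          fun ω => X l ω * (X j ω * X j ω * X m ω) by ext; ring,
          z l j j m (Ne.symm hjl) (Ne.symm hjl) hlm]
        simp [hjl, hlm]
  · by_cases hjl : j = l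
    · subst hjl
      by_cases hkm : k = m
      · subst hkm
        rw [show (fun ω => X j ω * X k ω * (X j ω * X k ω)) = fun ω => X j ω ^ 2 * X k ω ^ 2 by
          ext; ring, pair _ _ hjk]
        simp [hjk]
      · rw [show (fun ω => X j ω * X k ω * (X j ω * X m ω)) =
          fun ω => X k ω * (X j ω * X j ω * X m ω) by ext; ring,
          z k j j m (Ne.symm hjk) (Ne.symm hjk) hkm]
        simp [hjk, hkm, Ne.symm hjk]
    · by_cases hjm : j = m
      · subst hjm
        by_cases hkl : k = l
        · subst hkl
          rw [show (fun ω => X j ω * X k ω * (X k ω * X j ω)) =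
            fun ω => X j ω ^ 2 * X k ω ^ 2 by ext; ring, pair _ _ hjk]
          simp [hjk]
        · rw [show (fun ω => X j ω * X k ω * (X l ω * X j ω)) =
            fun ω => X k ω * (X j ω * X j ω * X l ω) by ext; ring,
            z k j j l (Ne.symm hjk) (Ne.symm hjk) hkl]
          simp [hjk, hkl, hjl]
      · rw [show (fun ω => X j ω * X k ω * (X l ω * X m ω)) =
            fun ω => X j ω * (X k ω * X l ω * X m ω) by ext; ring, z j k l m hjk hjl hjm]
        simp [hjk, hjl, hjm]

lemma srp_two {Ω ι : Type*} [MeasurableSpace Ω] {P : Measure Ω} [DecidableEq ι]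
    (X : ι → Ω → ℝ) (hi : iIndepFun X P) (hm : ∀ j, AEMeasurable (X j) P)
    (h0 : ∀ j, ∫ ω, X j ω ∂P = 0) (h2 : ∀ j, ∫ ω, X j ω ^ 2 ∂P = 1) (j k : ι) :
    ∫ ω, X j ω * X k ω ∂P = if j = k then 1 else 0 := by
  split_ifs with h
  · subst h
    simpa [pow_two] using h2 j
  · rw [(hi.indepFun h).integral_fun_mul_eq_mul_integral (hm j).aestronglyMeasurable
      (hm k).aestronglyMeasurable, h0, zero_mul]

lemma srp_mem {Ω : Type*} [MeasurableSpace Ω] {P : Measure Ω}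
    {f h : Ω → ℝ} (hf : MemLp f 4 P) (hh : MemLp h 4 P) : MemLp (fun ω => f ω * h ω) 2 P := by
  have : ENNReal.HolderTriple 4 4 2 := ⟨by
    rw [← two_mul, show (4 : ENNReal) = 2 * 2 by norm_num,
      ENNReal.mul_inv (by simp) (by simp), ← mul_assoc,
      ENNReal.mul_inv_cancel (by simp) (by simp), one_mul]⟩
  exact hh.mul hf

lemma srp_row {Ω ι : Type*} [MeasurableSpace Ω] {P : Measure Ω} [IsProbabilityMeasure P]
    [Fintype ι] [DecidableEq ι]
    (X : ι → Ω → ℝ) (hi : iIndepFun X P) (hL : ∀ j, MemLp (X j) 4 P)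
    (h0 : ∀ j, ∫ ω, X j ω ∂P = 0) (h2 : ∀ j, ∫ ω, X j ω ^ 2 ∂P = 1)
    (q : ι → ℝ) (h4 : ∀ j, ∫ ω, X j ω ^ 4 ∂P = q j) (u v : ι → ℝ) :
    variance (fun ω => (∑ j, X j ω * u j) * (∑ j, X j ω * v j)) P =
      (∑ j, u j * v j) ^ 2 + (∑ j, (u j) ^ 2) * (∑ j, (v j) ^ 2) +
          ∑ j, q j * (u j) ^ 2 * (v j) ^ 2 - 3 * ∑ j, (u j) ^ 2 * (v j) ^ 2 := by
  have hm : ∀ j, AEMeasurable (X j) P := fun j => (hL j).1.aemeasurable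
  have hp : ∀ j k, MemLp (fun ω => X j ω * X k ω) 2 P := fun j k => srp_mem (hL j) (hL k)
  have hS : ∀ w : ι → ℝ, MemLp (fun ω => ∑ j, X j ω * w j) 4 P := fun w =>
    memLp_finsetSum _ fun j _ => (hL j).mul_const (w j)
  rw [variance_eq_sub (srp_mem (hS u) (hS v))]
  have e1 : ∫ ω, (∑ j, X j ω * u j) * (∑ j, X j ω * v j) ∂P = ∑ j, u j * v j := by
    have : ∀ ω, (∑ j, X j ω * u j) * (∑ j, X j ω * v j)
        = ∑ j, ∑ k, (X j ω * X k ω) * (u j * v k) := by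
      intro ω
      rw [Finset.sum_mul_sum]
      exact Finset.sum_congr rfl fun j _ => Finset.sum_congr rfl fun k _ => by ring
    simp_rw [this]
    have hI : ∀ j k, Integrable (fun ω => X j ω * X k ω * (u j * v k)) P := fun j k =>
      ((hp j k).integrable (by norm_num)).mul_const _
    rw [integral_finsetSum _ fun j _ => integrable_finsetSum _ fun k _ => hI j k]
    refine Finset.sum_congr rfl fun j _ => ?_
    rw [integral_finsetSum _ fun k _ => hI j k]
    simp_rw [integral_mul_const, srp_two X hi hm h0 h2]
    simp
  have e2 : ∫ ω, ((∑ j, X j ω * u j) * (∑ j, X j ω * v j)) ^ 2 ∂P =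
      ∑ j, ∑ k, ∑ l, ∑ m,
      ((if j = k then 1 else 0) * (if l = m then 1 else 0) +
      (if j = l then 1 else 0) * (if k = m then 1 else 0) +
      (if j = m then 1 else 0) * (if k = l then 1 else 0) +
      (if j = k then 1 else 0) * (if j = l then 1 else 0) * (if j = m then 1 else 0)
        * (q j - 3)) * (u j * v k * (u l * v m)) := by
    have : ∀ ω, ((∑ j, X j ω * u j) * (∑ j, X j ω * v j)) ^ 2
        = ∑ j, ∑ k, ∑ l, ∑ m,
          (X j ω * X k ω * (X l ω * X m ω)) * (u j * v k * (u l * v m)) := by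
      intro ω
      rw [pow_two, Finset.sum_mul_sum, Finset.sum_mul]
      refine Finset.sum_congr rfl fun j _ => ?_
      rw [Finset.sum_mul]
      refine Finset.sum_congr rfl fun k _ => ?_
      rw [Finset.mul_sum]
      refine Finset.sum_congr rfl fun l _ => ?_
      rw [Finset.mul_sum]
      refine Finset.sum_congr rfl fun m _ => ?_
      ring
    simp_rw [this]
    have hI : ∀ j k l m, Integrable (fun ω => (X j ω * X k ω * (X l ω * X m ω))
        * (u j * v k * (u l * v m))) P := fun j k l m =>
      ((hp j k).integrable_mul (hp l m)).mul_const _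
    rw [integral_finsetSum _ fun j _ => integrable_finsetSum _ fun k _ =>
      integrable_finsetSum _ fun l _ => integrable_finsetSum _ fun m _ => hI j k l m]
    refine Finset.sum_congr rfl fun j _ => ?_
    rw [integral_finsetSum _ fun k _ =>
      integrable_finsetSum _ fun l _ => integrable_finsetSum _ fun m _ => hI j k l m]
    refine Finset.sum_congr rfl fun k _ => ?_
    rw [integral_finsetSum _ fun l _ => integrable_finsetSum _ fun m _ => hI j k l m]
    refine Finset.sum_congr rfl fun l _ => ?_
    rw [integral_finsetSum _ fun m _ => hI j k l m]
    refine Finset.sum_congr rfl fun m _ => ?_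
    rw [integral_mul_const, srp_four X hi hm h0 h2 q h4]
  have e3 : ∫ ω, ((fun ω => (∑ j, X j ω * u j) * (∑ j, X j ω * v j)) ^ 2) ω ∂P =
    ∫ ω, ((∑ j, X j ω * u j) * (∑ j, X j ω * v j)) ^ 2 ∂P := rfl
  rw [e3, e1, e2]
  simp only [add_mul, Finset.sum_add_distrib]
  have s1 : ∑ j, ∑ k, ∑ l, ∑ m, ((if j = k then (1:ℝ) else 0) * (if l = m then 1 else 0)) *
      (u j * v k * (u l * v m)) = (∑ j, u j * v j) ^ 2 := by
    simp only [mul_assoc, ite_mul, one_mul, zero_mul, Finset.sum_ite_eq, Finset.mem_univ, if_true,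
      Finset.sum_ite_irrel, Finset.sum_const_zero, pow_two, Finset.sum_mul_sum]
  have s2 : ∑ j, ∑ k, ∑ l, ∑ m, ((if j = l then (1:ℝ) else 0) * (if k = m then 1 else 0)) *
      (u j * v k * (u l * v m)) = (∑ j, (u j) ^ 2) * (∑ j, (v j) ^ 2) := by
    simp only [mul_assoc, ite_mul, one_mul, zero_mul, Finset.sum_ite_eq, Finset.mem_univ, if_true,
      Finset.sum_mul_sum, Finset.sum_ite_irrel, Finset.sum_const_zero]
    exact Finset.sum_congr rfl fun j _ => Finset.sum_congr rfl fun k _ => by ring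
  have s3 : ∑ j, ∑ k, ∑ l, ∑ m, ((if j = m then (1:ℝ) else 0) * (if k = l then 1 else 0)) *
      (u j * v k * (u l * v m)) = (∑ j, u j * v j) ^ 2 := by
    rw [pow_two, Finset.sum_mul_sum]
    refine Finset.sum_congr rfl fun j _ => Finset.sum_congr rfl fun k _ => ?_
    simp only [mul_assoc, ite_mul, one_mul, zero_mul, Finset.sum_ite_eq, Finset.mem_univ, if_true]
    ring
  have s4 : ∑ j, ∑ k, ∑ l, ∑ m, ((if j = k then (1:ℝ) else 0) * (if j = l then 1 else 0)
      * (if j = m then 1 else 0) * (q j - 3)) * (u j * v k * (u l * v m)) =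
      ∑ j, q j * (u j) ^ 2 * (v j) ^ 2 - 3 * ∑ j, (u j) ^ 2 * (v j) ^ 2 := by
    simp only [mul_assoc, ite_mul, one_mul, zero_mul, Finset.sum_ite_eq, Finset.mem_univ, if_true,
      Finset.sum_ite_irrel, Finset.sum_const_zero]
    rw [Finset.mul_sum, ← Finset.sum_sub_distrib]
    exact Finset.sum_congr rfl fun j _ => by ring
  rw [s1, s2, s3, s4]
  ring

/-- Proposition 1 (variance part): with `Φ_{ij}` mutually independent,
`E[Φ_{ij}] = 0`, `E[Φ_{ij}²] = 1`, `E[Φ_{ij}⁴] = 1/g_j`, and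
`x = (1/√ℓ)Φu`, `y = (1/√ℓ)Φv`, one has
`Var(⟨x,y⟩) = (1/ℓ)(⟨u,v⟩² + ‖u‖₂²‖v‖₂² + Σ_j (1/g_j) u_j² v_j² − 3 Σ_j u_j² v_j²)`. -/
theorem sparse_projection_inner_variance
    {Ω : Type*} [MeasurableSpace Ω] (P : Measure Ω) [IsProbabilityMeasure P]
    (L N : ℕ) (hL : 0 < L) (hN : 0 < N) (g : Fin N → ℝ)
    (hg0 : ∀ j, 0 < g j) (hg1 : ∀ j, g j ≤ 1)
    (Φ : Fin L × Fin N → Ω → ℝ)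
    (hindep : iIndepFun Φ P)
    (hL4 : ∀ p, MemLp (Φ p) 4 P)
    (hmean : ∀ i j, ∫ ω, Φ (i, j) ω ∂P = 0)
    (hsq : ∀ i j, ∫ ω, (Φ (i, j) ω) ^ 2 ∂P = 1)
    (hfour : ∀ i j, ∫ ω, (Φ (i, j) ω) ^ 4 ∂P = 1 / g j)
    (u v : Fin N → ℝ)
    (x y : Ω → Fin L → ℝ)
    (hx : ∀ ω i, x ω i = (1 / Real.sqrt L) * ∑ j, Φ (i, j) ω * u j)
    (hy : ∀ ω i, y ω i = (1 / Real.sqrt L) * ∑ j, Φ (i, j) ω * v j) :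
    ProbabilityTheory.variance (fun ω => ∑ i, x ω i * y ω i) P =
      (1 / (L : ℝ)) *
        ((∑ j, u j * v j) ^ 2 + (∑ j, (u j) ^ 2) * (∑ j, (v j) ^ 2) +
          ∑ j, (1 / g j) * (u j) ^ 2 * (v j) ^ 2 - 3 * ∑ j, (u j) ^ 2 * (v j) ^ 2) := by
  have hsL : (1 / Real.sqrt L) * (1 / Real.sqrt L) = 1 / (L : ℝ) := by
    rw [div_mul_div_comm, one_mul, Real.mul_self_sqrt (Nat.cast_nonneg L)]
  have hL0 : (L : ℝ) ≠ 0 := by exact_mod_cast hL.ne'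
  set Z : Fin L → Ω → ℝ := fun i ω => (∑ j, Φ (i, j) ω * u j) * (∑ j, Φ (i, j) ω * v j) with hZ
  have e : (fun ω => ∑ i, x ω i * y ω i) = fun ω => (1 / (L : ℝ)) * (∑ i, Z i) ω := by
    ext ω
    rw [Finset.sum_apply, Finset.mul_sum]
    refine Finset.sum_congr rfl fun i _ => ?_
    rw [hx, hy, ← hsL, hZ]
    ring
  have hS : ∀ i, ∀ w : Fin N → ℝ, MemLp (fun ω => ∑ j, Φ (i, j) ω * w j) 4 P := fun i w =>
    memLp_finsetSum _ fun j _ => (hL4 (i, j)).mul_const (w j)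
  have hrow : ∀ i, variance (Z i) P = (∑ j, u j * v j) ^ 2 + (∑ j, (u j) ^ 2) * (∑ j, (v j) ^ 2) +
          ∑ j, (1 / g j) * (u j) ^ 2 * (v j) ^ 2 - 3 * ∑ j, (u j) ^ 2 * (v j) ^ 2 := fun i =>
    srp_row (fun j => Φ (i, j)) (hindep.precomp (g := fun j => (i, j))
      (fun a b h => (Prod.mk.inj h).2)) (fun j => hL4 _) (hmean i) (hsq i) _ (hfour i) u v
  have hmem : ∀ i (j : Fin N), (i, j) ∈ ({i} ×ˢ univ : Finset (Fin L × Fin N)) := by simp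
  rw [e, variance_const_mul, IndepFun.variance_sum (X := Z) (s := univ) (fun i _ => srp_mem (hS i u) (hS i v))]
  · simp only [hrow, Finset.sum_const, Finset.card_univ, Fintype.card_fin, nsmul_eq_mul]
    field_simp
  · intro i _ i' _ hii
    exact srp_indep Φ hindep (fun p => (hL4 p).1.aemeasurable) ({i} ×ˢ univ) ({i'} ×ˢ univ)
      (by
        rw [Finset.disjoint_left]
        rintro ⟨a, b⟩ h1 h2
        simp only [Finset.mem_product, Finset.mem_singleton, Finset.mem_univ, and_true] at h1 h2
        exact hii (h1 ▸ h2))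
      (fun z => (∑ j, z ⟨(i, j), hmem i j⟩ * u j) * (∑ j, z ⟨(i, j), hmem i j⟩ * v j))
      (fun z => (∑ j, z ⟨(i', j), hmem i' j⟩ * u j) * (∑ j, z ⟨(i', j), hmem i' j⟩ * v j))
      (by fun_prop) (by fun_prop)
end

section
/- (Chebyshev step in the proof of Lemma 1.) Let (Ω, P) be a probability space, let ℓ and N be positive integers, and let g : Fin N → ℝ with 0 < g_j ≤ 1 for all j. Let (Φ_{ij})_{i∈Fin ℓ, j∈Fin N} be mutually independent real random variables with E[Φ_{ij}] = 0, E[Φ_{ij}²] = 1, and E[Φ_{ij}⁴] = 1/g_j for all i, j (each Φ_{ij} lying in L⁴). Let u, v ∈ ℝ^N with u ≠ 0 and v ≠ 0, and suppose ‖u‖_∞ ≤ μ·‖u‖₂ for some μ ≥ 0. Let x = (1/√ℓ)·Φu and y = (1/√ℓ)·Φv, where Φ is the ℓ × N random matrix with entries Φ_{ij}. Then for every ε > 0, P( |⟨x, y⟩ − ⟨u, v⟩| ≥ ε·‖u‖₂·‖v‖₂ ) ≤ (2 + μ²·max_j (1/g_j)) / (ε²·ℓ). -/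
open MeasureTheory ProbabilityTheory Finset

/-- `f` is integrable with integral `c`. -/
def HasMom {Ω : Type*} [MeasurableSpace Ω] (P : Measure Ω) (f : Ω → ℝ) (c : ℝ) : Prop :=
  Integrable f P ∧ ∫ ω, f ω ∂P = c

namespace HasMom

variable {Ω : Type*} [MeasurableSpace Ω] {P : Measure Ω}

theorem add {f g : Ω → ℝ} {c d : ℝ} (hf : HasMom P f c) (hg : HasMom P g d) :
    HasMom P (fun ω => f ω + g ω) (c + d) :=
  ⟨hf.1.add hg.1, by rw [integral_add hf.1 hg.1, hf.2, hg.2]⟩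

theorem smul {f : Ω → ℝ} {c : ℝ} (k : ℝ) (hf : HasMom P f c) :
    HasMom P (fun ω => k * f ω) (k * c) :=
  ⟨hf.1.const_mul k, by rw [integral_const_mul, hf.2]⟩

theorem congr {f g : Ω → ℝ} {c d : ℝ} (hf : HasMom P f c) (h : ∀ ω, g ω = f ω) (hc : d = c) :
    HasMom P g d := by
  have : g = f := funext h
  rw [this, hc]; exact hf

theorem mul_indep {A B X : Ω → ℝ} (hAB : IndepFun (fun ω => (A ω, B ω)) X P)
    {q : ℝ × ℝ → ℝ} (hq : Measurable q) {r : ℝ → ℝ} (hr : Measurable r) {c d : ℝ}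
    (h1 : HasMom P (fun ω => q (A ω, B ω)) c) (h2 : HasMom P (fun ω => r (X ω)) d) :
    HasMom P (fun ω => q (A ω, B ω) * r (X ω)) (c * d) := by
  have h : IndepFun (fun ω => q (A ω, B ω)) (fun ω => r (X ω)) P := hAB.comp hq hr
  refine ⟨h.integrable_mul h1.1 h2.1, ?_⟩
  rw [h.integral_fun_mul_eq_mul_integral h1.1.1 h2.1.1, h1.2, h2.2]

end HasMom

/-- The joint moments carried through the induction. -/
structure Moms {Ω : Type*} [MeasurableSpace Ω] (P : Measure Ω) (A B : Ω → ℝ)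
    (a b c f : ℝ) : Prop where
  m10 : HasMom P A 0
  m01 : HasMom P B 0
  m20 : HasMom P (fun ω => A ω ^ 2) a
  m02 : HasMom P (fun ω => B ω ^ 2) b
  m11 : HasMom P (fun ω => A ω * B ω) c
  m21 : ∃ t, HasMom P (fun ω => A ω ^ 2 * B ω) t
  m12 : ∃ t, HasMom P (fun ω => A ω * B ω ^ 2) t
  m22 : HasMom P (fun ω => A ω ^ 2 * B ω ^ 2) f

theorem Moms.step {Ω : Type*} [MeasurableSpace Ω] {P : Measure Ω} {A B X : Ω → ℝ}
    {a b c f s k : ℝ} (h : Moms P A B a b c f) (hAB : IndepFun (fun ω => (A ω, B ω)) X P)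
    (h1 : HasMom P X 0) (h2 : HasMom P (fun ω => X ω ^ 2) 1)
    (h3 : HasMom P (fun ω => X ω ^ 3) s) (h4 : HasMom P (fun ω => X ω ^ 4) k) (u v : ℝ) :
    Moms P (fun ω => A ω + X ω * u) (fun ω => B ω + X ω * v)
      (a + u ^ 2) (b + v ^ 2) (c + u * v)
      (f + v ^ 2 * a + 4 * u * v * c + u ^ 2 * b + u ^ 2 * v ^ 2 * k) := by
  obtain ⟨m10, m01, m20, m02, m11, ⟨t, m21⟩, ⟨t', m12⟩, m22⟩ := h
  have mA1 := HasMom.mul_indep hAB (q := fun p => p.1) (r := fun x => x) (by fun_prop) (by fun_prop) m10 h1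
  have mA2 := HasMom.mul_indep hAB (q := fun p => p.1) (r := fun x => x ^ 2) (by fun_prop) (by fun_prop) m10 h2
  have mA3 := HasMom.mul_indep hAB (q := fun p => p.1) (r := fun x => x ^ 3) (by fun_prop) (by fun_prop) m10 h3
  have mB1 := HasMom.mul_indep hAB (q := fun p => p.2) (r := fun x => x) (by fun_prop) (by fun_prop) m01 h1
  have mB2 := HasMom.mul_indep hAB (q := fun p => p.2) (r := fun x => x ^ 2) (by fun_prop) (by fun_prop) m01 h2
  have mB3 := HasMom.mul_indep hAB (q := fun p => p.2) (r := fun x => x ^ 3) (by fun_prop) (by fun_prop) m01 h3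
  have mAA1 := HasMom.mul_indep hAB (q := fun p => p.1 ^ 2) (r := fun x => x) (by fun_prop) (by fun_prop) m20 h1
  have mAA2 := HasMom.mul_indep hAB (q := fun p => p.1 ^ 2) (r := fun x => x ^ 2) (by fun_prop) (by fun_prop) m20 h2
  have mBB1 := HasMom.mul_indep hAB (q := fun p => p.2 ^ 2) (r := fun x => x) (by fun_prop) (by fun_prop) m02 h1
  have mBB2 := HasMom.mul_indep hAB (q := fun p => p.2 ^ 2) (r := fun x => x ^ 2) (by fun_prop) (by fun_prop) m02 h2
  have mAB1 := HasMom.mul_indep hAB (q := fun p => p.1 * p.2) (r := fun x => x) (by fun_prop) (by fun_prop) m11 h1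
  have mAB2 := HasMom.mul_indep hAB (q := fun p => p.1 * p.2) (r := fun x => x ^ 2) (by fun_prop) (by fun_prop) m11 h2
  have mAAB1 := HasMom.mul_indep hAB (q := fun p => p.1 ^ 2 * p.2) (r := fun x => x) (by fun_prop) (by fun_prop) m21 h1
  have mABB1 := HasMom.mul_indep hAB (q := fun p => p.1 * p.2 ^ 2) (r := fun x => x) (by fun_prop) (by fun_prop) m12 h1
  refine ⟨?_, ?_, ?_, ?_, ?_, ?_, ?_, ?_⟩
  · exact (m10.add (h1.smul u)).congr (fun ω => by ring) (by ring)
  · exact (m01.add (h1.smul v)).congr (fun ω => by ring) (by ring)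
  · exact ((m20.add (mA1.smul (2 * u))).add (h2.smul (u ^ 2))).congr
      (fun ω => by ring) (by ring)
  · exact ((m02.add (mB1.smul (2 * v))).add (h2.smul (v ^ 2))).congr
      (fun ω => by ring) (by ring)
  · exact (((m11.add (mA1.smul v)).add (mB1.smul u)).add (h2.smul (u * v))).congr
      (fun ω => by ring) (by ring)
  · refine ⟨_, ((((((m21.add (mAA1.smul v)).add (mAB1.smul (2 * u))).add
      (mA2.smul (2 * u * v))).add (mB2.smul (u ^ 2))).add (h3.smul (u ^ 2 * v)))).congr
      (fun ω => by ring) rfl⟩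
  · refine ⟨_, ((((((m12.add (mBB1.smul u)).add (mAB1.smul (2 * v))).add
      (mB2.smul (2 * u * v))).add (mA2.smul (v ^ 2))).add (h3.smul (v ^ 2 * u)))).congr
      (fun ω => by ring) rfl⟩
  · exact (((((((((m22.add (mAAB1.smul (2 * v))).add (mABB1.smul (2 * u))).add
      (mAA2.smul (v ^ 2))).add (mAB2.smul (4 * u * v))).add (mBB2.smul (u ^ 2))).add
      (mA3.smul (2 * u * v ^ 2))).add (mB3.smul (2 * u ^ 2 * v))).add
      (h4.smul (u ^ 2 * v ^ 2)))).congr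
      (fun ω => by ring) (by ring)

theorem moms_sum {Ω : Type*} [MeasurableSpace Ω] {P : Measure Ω} [IsProbabilityMeasure P]
    {ι : Type*} [DecidableEq ι] (X : ι → Ω → ℝ) (hmeas : ∀ j, Measurable (X j))
    (hind : iIndepFun X P) (hL4 : ∀ j, MemLp (X j) 4 P)
    (hmean : ∀ j, ∫ ω, X j ω ∂P = 0) (hsq : ∀ j, ∫ ω, X j ω ^ 2 ∂P = 1)
    (k : ι → ℝ) (hfour : ∀ j, ∫ ω, X j ω ^ 4 ∂P = k j) (u v : ι → ℝ) (S : Finset ι) :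
    Moms P (fun ω => ∑ j ∈ S, X j ω * u j) (fun ω => ∑ j ∈ S, X j ω * v j)
      (∑ j ∈ S, u j ^ 2) (∑ j ∈ S, v j ^ 2) (∑ j ∈ S, u j * v j)
      ((∑ j ∈ S, u j ^ 2) * (∑ j ∈ S, v j ^ 2) + 2 * (∑ j ∈ S, u j * v j) ^ 2
        + ∑ j ∈ S, u j ^ 2 * v j ^ 2 * (k j - 3)) := by
  induction S using Finset.induction_on with
  | empty =>
    have h0 : HasMom P (fun _ => (0 : ℝ)) 0 := ⟨integrable_zero _ _ _, by simp⟩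
    constructor
    all_goals first
      | exact h0.congr (fun ω => by simp) (by simp)
      | exact ⟨0, h0.congr (fun ω => by simp) (by simp)⟩
  | insert i S hi ih =>
    have hint : ∀ n : ℕ, n ≤ 4 → Integrable (fun ω => X i ω ^ n) P := by
      intro n hn
      have : MemLp (X i) n P := (hL4 i).mono_exponent (by exact_mod_cast hn)
      refine (this.integrable_norm_pow').mono' (((hmeas i).pow_const n).aestronglyMeasurable) ?_
      filter_upwards with ω
      simp
    have hI : IndepFun (fun ω => (∑ j ∈ S, X j ω * u j, ∑ j ∈ S, X j ω * v j)) (X i) P := by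
      have h := hind.indepFun_finset S {i} (by simpa using hi) hmeas
      have hψ : Measurable (fun y : ({i} : Finset ι) → ℝ => y ⟨i, by simp⟩) :=
        measurable_pi_apply _
      have h' := h.comp
        (φ := fun y : S → ℝ => (∑ j : S, y j * u j, ∑ j : S, y j * v j))
        (by fun_prop) hψ
      convert h' using 1
      funext ω
      simp only [Function.comp]
      rw [Finset.sum_coe_sort S (fun j => X j ω * u j),
        Finset.sum_coe_sort S (fun j => X j ω * v j)]
      rfl
    have := ih.step hI ⟨by simpa using hint 1 (by norm_num), hmean i⟩
      ⟨hint 2 (by norm_num), hsq i⟩ ⟨hint 3 (by norm_num), rfl⟩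
      ⟨hint 4 (by norm_num), hfour i⟩ (u i) (v i)
    simp only [Finset.sum_insert hi]
    convert this using 1
    · funext ω; ring
    · funext ω; ring
    · ring
    · ring
    · ring
    · ring


/-- Chebyshev step in the proof of Lemma 1: for the sparse random projections
`x = (1/√ℓ)Φu`, `y = (1/√ℓ)Φv`, and any `ε > 0`,
`P(|⟨x,y⟩ − ⟨u,v⟩| ≥ ε‖u‖₂‖v‖₂) ≤ (2 + μ² max_j (1/g_j)) / (ε² ℓ)`. -/
theorem sparse_projection_chebyshev_bound
    {Ω : Type*} [MeasurableSpace Ω] (P : Measure Ω) [IsProbabilityMeasure P]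
    (L N : ℕ) (hL : 0 < L) (hN : 0 < N) (g : Fin N → ℝ)
    (hg0 : ∀ j, 0 < g j) (hg1 : ∀ j, g j ≤ 1)
    (Φ : Fin L × Fin N → Ω → ℝ)
    (hmeas : ∀ p, Measurable (Φ p))
    (hindep : iIndepFun Φ P)
    (hL4 : ∀ p, MemLp (Φ p) 4 P)
    (hmean : ∀ i j, ∫ ω, Φ (i, j) ω ∂P = 0)
    (hsq : ∀ i j, ∫ ω, (Φ (i, j) ω) ^ 2 ∂P = 1)
    (hfour : ∀ i j, ∫ ω, (Φ (i, j) ω) ^ 4 ∂P = 1 / g j)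
    (u v : Fin N → ℝ) (hu : u ≠ 0) (hv : v ≠ 0)
    (μ : ℝ) (hμ : 0 ≤ μ)
    (hpeak : ∀ j, |u j| ≤ μ * Real.sqrt (∑ j, (u j) ^ 2))
    (x y : Ω → Fin L → ℝ)
    (hx : ∀ ω i, x ω i = (1 / Real.sqrt L) * ∑ j, Φ (i, j) ω * u j)
    (hy : ∀ ω i, y ω i = (1 / Real.sqrt L) * ∑ j, Φ (i, j) ω * v j)
    (ε : ℝ) (hε : 0 < ε) :
    P {ω | ε * Real.sqrt (∑ j, (u j) ^ 2) * Real.sqrt (∑ j, (v j) ^ 2) ≤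
        |(∑ i, x ω i * y ω i) - ∑ j, u j * v j|} ≤
      ENNReal.ofReal
        ((2 + μ ^ 2 * Finset.univ.sup' (Finset.univ_nonempty_iff.mpr ⟨⟨0, hN⟩⟩)
            (fun j => 1 / g j)) / (ε ^ 2 * L)) := by

  classical
  have hLr : (0 : ℝ) < L := by exact_mod_cast hL
  set M := Finset.univ.sup' (Finset.univ_nonempty_iff.mpr ⟨⟨0, hN⟩⟩)
            (fun j => 1 / g j) with hM
  set a := ∑ j, (u j) ^ 2 with ha
  set b := ∑ j, (v j) ^ 2 with hb
  set c := ∑ j, u j * v j with hc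
  have ha0 : 0 < a := by
    obtain ⟨j, hj⟩ := Function.ne_iff.mp hu
    exact Finset.sum_pos' (fun _ _ => sq_nonneg _) ⟨j, mem_univ _, sq_pos_of_ne_zero hj⟩
  have hb0 : 0 < b := by
    obtain ⟨j, hj⟩ := Function.ne_iff.mp hv
    exact Finset.sum_pos' (fun _ _ => sq_nonneg _) ⟨j, mem_univ _, sq_pos_of_ne_zero hj⟩
  have hcs : c ^ 2 ≤ a * b := Finset.sum_mul_sq_le_sq_mul_sq _ _ _
  have hMj : ∀ j, 1 / g j ≤ M := fun j => Finset.le_sup' (fun j => 1 / g j) (mem_univ j)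
  have hM0 : 0 ≤ M := (one_div_pos.mpr (hg0 ⟨0, hN⟩)).le.trans (hMj _)
  have hu2 : ∀ j, u j ^ 2 ≤ μ ^ 2 * a := by
    intro j
    have := pow_le_pow_left₀ (abs_nonneg _) (hpeak j) 2
    rwa [sq_abs, mul_pow, Real.sq_sqrt ha0.le] at this
  let W : Fin L → Ω → ℝ := fun i ω => (∑ j, Φ (i, j) ω * u j) * (∑ j, Φ (i, j) ω * v j)
  have hmom : ∀ i, Moms P (fun ω => ∑ j, Φ (i, j) ω * u j) (fun ω => ∑ j, Φ (i, j) ω * v j)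
      a b c (a * b + 2 * c ^ 2 + ∑ j, u j ^ 2 * v j ^ 2 * (1 / g j - 3)) := fun i =>
    moms_sum (fun j => Φ (i, j)) (fun j => hmeas _)
      (hindep.precomp (g := fun j => (i, j)) (fun _ _ h => (Prod.mk.inj h).2))
      (fun j => hL4 _) (hmean i) (hsq i) (fun j => 1 / g j) (hfour i) u v univ
  have hWmeas : ∀ i, Measurable (W i) := fun i => by
    have := hmeas
    fun_prop
  have hWL2 : ∀ i, MemLp (W i) 2 P := fun i => by
    rw [memLp_two_iff_integrable_sq (hWmeas i).aestronglyMeasurable]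
    simpa only [W, mul_pow] using (hmom i).m22.1
  have hWmean : ∀ i, ∫ ω, W i ω ∂P = c := fun i => (hmom i).m11.2
  have hWvar : ∀ i, variance (W i) P ≤ (2 + μ ^ 2 * M) * (a * b) := by
    intro i
    rw [variance_eq_sub (hWL2 i), hWmean i]
    have h2 : ∫ ω, (W i ^ 2) ω ∂P =
        a * b + 2 * c ^ 2 + ∑ j, u j ^ 2 * v j ^ 2 * (1 / g j - 3) := by
      have := (hmom i).m22.2
      simpa only [W, Pi.pow_apply, mul_pow] using this
    rw [h2]
    have h3 : ∑ j, u j ^ 2 * v j ^ 2 * (1 / g j - 3) ≤ μ ^ 2 * a * M * b := by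
      rw [hb, Finset.mul_sum]
      refine Finset.sum_le_sum fun j _ => ?_
      calc u j ^ 2 * v j ^ 2 * (1 / g j - 3) ≤ u j ^ 2 * v j ^ 2 * M := by
            apply mul_le_mul_of_nonneg_left _ (by positivity)
            linarith [hMj j]
        _ = u j ^ 2 * (M * v j ^ 2) := by ring
        _ ≤ μ ^ 2 * a * (M * v j ^ 2) :=
            mul_le_mul_of_nonneg_right (hu2 j) (by positivity)
        _ = _ := by ring
    nlinarith
  have hWind : Set.Pairwise (↑(univ : Finset (Fin L)) : Set (Fin L))
      fun i k => IndepFun (W i) (W k) P := by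
    intro i _ k _ hik
    let row : Fin L → Finset (Fin L × Fin N) := fun i => univ.image (fun j => (i, j))
    have hrow : ∀ i j, (i, j) ∈ row i := fun i j => by simp [row]
    have hd : Disjoint (row i) (row k) := by
      rw [Finset.disjoint_left]
      rintro p hp hq
      simp only [row, mem_image, mem_univ, true_and] at hp hq
      obtain ⟨_, rfl⟩ := hp
      obtain ⟨_, h⟩ := hq
      exact hik (Prod.mk.inj h).1.symm
    have h := hindep.indepFun_finset (row i) (row k) hd hmeas
    exact h.comp
      (φ := fun y : row i → ℝ => (∑ j, y ⟨(i, j), hrow i j⟩ * u j) * (∑ j, y ⟨(i, j), hrow i j⟩ * v j))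
      (ψ := fun y : row k → ℝ => (∑ j, y ⟨(k, j), hrow k j⟩ * u j) * (∑ j, y ⟨(k, j), hrow k j⟩ * v j))
      (by fun_prop) (by fun_prop)
  have hvs := IndepFun.variance_sum (fun i _ => hWL2 i) hWind
  let Z : Ω → ℝ := fun ω => (1 / (L : ℝ)) * (∑ i, W i) ω
  have hxy : ∀ ω, ∑ i, x ω i * y ω i = Z ω := by
    intro ω
    simp only [Z, Finset.sum_apply, Finset.mul_sum, W]
    refine Finset.sum_congr rfl fun i _ => ?_
    rw [hx, hy, mul_mul_mul_comm, div_mul_div_comm, Real.mul_self_sqrt hLr.le, one_mul]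
    simp only [Finset.mul_sum]
  have hZL2 : MemLp Z 2 P := (memLp_finsetSum' univ (fun i _ => hWL2 i)).const_mul _
  have hZmean : ∫ ω, Z ω ∂P = c := by
    simp only [Z, integral_const_mul, Finset.sum_apply]
    rw [integral_finsetSum _ (fun i _ => (hmom i).m11.1)]
    rw [Finset.sum_congr rfl (fun i _ => hWmean i)]
    simp
    field_simp
  have hZvar : variance Z P ≤ (2 + μ ^ 2 * M) * (a * b) / L := by
    simp only [Z]
    rw [variance_const_mul, hvs]
    have : ∑ i, variance (W i) P ≤ L * ((2 + μ ^ 2 * M) * (a * b)) := by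
      refine (Finset.sum_le_sum fun i _ => hWvar i).trans ?_
      simp
    calc (1 / (L : ℝ)) ^ 2 * ∑ i, variance (W i) P
        ≤ (1 / (L : ℝ)) ^ 2 * (L * ((2 + μ ^ 2 * M) * (a * b))) :=
          mul_le_mul_of_nonneg_left this (by positivity)
      _ = _ := by field_simp
  have hcpos : 0 < ε * Real.sqrt a * Real.sqrt b := by positivity
  have key := meas_ge_le_variance_div_sq hZL2 hcpos
  rw [hZmean] at key
  simp only [hxy]
  refine key.trans (ENNReal.ofReal_le_ofReal ?_)
  rw [mul_pow, mul_pow, Real.sq_sqrt ha0.le, Real.sq_sqrt hb0.le]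
  calc variance Z P / (ε ^ 2 * a * b) ≤ ((2 + μ ^ 2 * M) * (a * b) / L) / (ε ^ 2 * a * b) := by
        gcongr
    _ = _ := by field_simp
end
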